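/- If a one-dimensional linear code over a finite field is a left group code, then it is a cyclic group code, i.e., a left G-code for G a cyclic group. -/

import Mathlib

/-!
A line spanned by `v` is a left `G`-code exactly when, after labelling the coordinates by `G`, the
vector `v` is a scalar multiple of a homomorphism `χ : G →* Fˣ`: each `g` must act on the line
through a scalar. The range of `χ` is a finite subgroup of `Fˣ`, hence cyclic, and its order divides
`|G|`, so any cyclic group `H` of order `|G|` surjects onto it. The fibres of both surjections are
cosets of kernels of equal order, so matching them fibre by fibre relabels the coordinates by `H`
and turns `χ` into a homomorphism on `H`.
-/

/-- Action of a permutation on a vector by permuting coordinates: `σ(e_i) = e_{σ(i)}`. -/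
def permVec {n : ℕ} {F : Type*} (σ : Equiv.Perm (Fin n)) (x : Fin n → F) : Fin n → F :=
  fun i => x (σ.symm i)

/-- The group of permutation automorphisms of a linear code `C`, as a set of permutations. -/
def PAutSet {F : Type*} [Field F] {n : ℕ} (C : Submodule F (Fin n → F)) :
    Set (Equiv.Perm (Fin n)) :=
  {σ | ∀ x : Fin n → F, x ∈ C ↔ permVec σ x ∈ C}

/-- A subgroup of `S_n` is regular if it is transitive and has order `n`. -/
def IsRegularSubgroup {n : ℕ} (H : Subgroup (Equiv.Perm (Fin n))) : Prop :=
  (∀ i j : Fin n, ∃ h ∈ H, h i = j) ∧ Nat.card H = n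

/-- `C` is a left `G`-code: some bijection of the standard basis with `G` carries `C`
to a left ideal of the group algebra `F G` (equivalently, the image subspace is stable
under left multiplication by every group element). -/
def IsLeftGCode {F : Type*} [Field F] {n : ℕ} (G : Type*) [Group G]
    (C : Submodule F (Fin n → F)) : Prop :=
  ∃ φ : Fin n ≃ G, ∀ g : G, ∀ x ∈ C, (fun i => x (φ.symm (g * φ i))) ∈ C

/-- `C` is a (two-sided) `G`-code: some bijection of the standard basis with `G` carries `C`
to a two-sided ideal of the group algebra `F G`. -/
def IsGCode {F : Type*} [Field F] {n : ℕ} (G : Type*) [Group G]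
    (C : Submodule F (Fin n → F)) : Prop :=
  ∃ φ : Fin n ≃ G, ∀ g : G, ∀ x ∈ C,
    (fun i => x (φ.symm (g * φ i))) ∈ C ∧ (fun i => x (φ.symm (φ i * g))) ∈ C

section GroupHom

variable {G H R A : Type*} [Group G] [Group H] [Group R] [Group A]

theorem card_ker_mul_card_of_surjective {f : G →* R} (hf : Function.Surjective f) :
    Nat.card f.ker * Nat.card R = Nat.card G := by
  rw [← f.ker.card_mul_index, Subgroup.index_ker, MonoidHom.range_eq_top.2 hf, Subgroup.card_top]

theorem exists_equiv_of_surjective_of_card_eq [Finite G] {f : G →* R} {g : H →* R}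
    (hf : Function.Surjective f) (hg : Function.Surjective g) (hcard : Nat.card G = Nat.card H) :
    ∃ e : G ≃ H, ∀ a, g (e a) = f a := by
  have : Finite R := Finite.of_surjective f hf
  have : Finite H := Nat.finite_of_card_ne_zero (hcard ▸ Nat.card_pos.ne')
  have hker : Nat.card f.ker = Nat.card g.ker :=
    Nat.eq_of_mul_eq_mul_right (Nat.card_pos (α := R)) <| by
      rw [card_ker_mul_card_of_surjective hf, card_ker_mul_card_of_surjective hg, hcard]
  let fiberEquiv (r : R) : {a // f a = r} ≃ {b // g b = r} :=
    (f.fiberEquivKerOfSurjective hf r).trans <|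
      (Finite.card_eq.1 hker).some.trans (g.fiberEquivKerOfSurjective hg r).symm
  exact ⟨Equiv.ofFiberEquiv fiberEquiv, Equiv.ofFiberEquiv_map fiberEquiv⟩

theorem exists_surjective_monoidHom_of_card_dvd [IsCyclic H] [IsCyclic R]
    (hdvd : Nat.card R ∣ Nat.card H) : ∃ f : H →* R, Function.Surjective f := by
  obtain ⟨h, hh⟩ := IsCyclic.exists_generator (α := H)
  obtain ⟨r, hr⟩ := IsCyclic.exists_generator (α := R)
  have hord : orderOf r ∣ orderOf h := by
    rwa [orderOf_eq_card_of_forall_mem_zpowers hh, orderOf_eq_card_of_forall_mem_zpowers hr]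
  refine ⟨monoidHomOfForallMemZpowers hh hord, fun x ↦ ?_⟩
  obtain ⟨k, rfl⟩ := Subgroup.mem_zpowers_iff.1 (hr x)
  exact ⟨h ^ k, by rw [map_zpow, monoidHomOfForallMemZpowers_apply_gen]⟩

theorem exists_equiv_monoidHom_of_isCyclic_range [Finite G] [IsCyclic H] (χ : G →* A)
    [IsCyclic χ.range] (hcard : Nat.card G = Nat.card H) :
    ∃ (e : G ≃ H) (ψ : H →* A), ∀ g, ψ (e g) = χ g := by
  obtain ⟨f, hf⟩ := exists_surjective_monoidHom_of_card_dvd (H := H) (R := χ.range)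
    (hcard ▸ Subgroup.card_range_dvd χ)
  obtain ⟨e, he⟩ :=
    exists_equiv_of_surjective_of_card_eq χ.rangeRestrict_surjective hf hcard
  exact ⟨e, χ.range.subtype.comp f, fun g ↦ congrArg Subtype.val (he g)⟩

end GroupHom

theorem exists_units_monoidHom_of_forall_translate_eq_mul {G M : Type*} [Group G]
    [MonoidWithZero M] [IsRightCancelMulZero M] {w : G → M}
    (hw : ∀ g, ∃ c, ∀ a, w (g * a) = c * w a) :
    ∃ χ : G →* Mˣ, ∀ g, w g = χ g * w 1 := by
  choose c hc using hw
  have hc₁ (g : G) : w g = c g * w 1 := by rw [← hc, mul_one]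
  by_cases h₁ : w 1 = 0
  · exact ⟨1, fun g ↦ by rw [hc₁, h₁, mul_zero, mul_zero]⟩
  · let χ : G →* M :=
      { toFun := c
        map_one' := mul_right_cancel₀ h₁ <| by rw [← hc₁, one_mul]
        map_mul' := fun a b ↦ mul_right_cancel₀ h₁ <| by rw [← hc₁, hc, hc₁ b, mul_assoc] }
    exact ⟨χ.toHomUnits, hc₁⟩

section LeftGCode

variable {F : Type*} [Field F] {n : ℕ} {G H : Type*} [Group G] [Group H]

theorem isLeftGCode_span_singleton_iff {v : Fin n → F} :
    IsLeftGCode G (Submodule.span F {v}) ↔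
      ∃ (φ : Fin n ≃ G) (χ : G →* Fˣ) (c : F), ∀ i, v i = χ (φ i) * c := by
  constructor
  · rintro ⟨φ, hφ⟩
    have translate (g : G) : ∃ c : F, ∀ a, v (φ.symm (g * a)) = c * v (φ.symm a) := by
      obtain ⟨c, hc⟩ := Submodule.mem_span_singleton.1
        (hφ g v (Submodule.mem_span_singleton_self v))
      exact ⟨c, fun a ↦ by simpa using (congrFun hc (φ.symm a)).symm⟩
    obtain ⟨χ, hχ⟩ := exists_units_monoidHom_of_forall_translate_eq_mul (w := v ∘ φ.symm) translate
    exact ⟨φ, χ, v (φ.symm 1), fun i ↦ by simpa using hχ (φ i)⟩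
  · rintro ⟨φ, χ, c, hv⟩
    refine ⟨φ, fun g x hx ↦ ?_⟩
    obtain ⟨a, rfl⟩ := Submodule.mem_span_singleton.1 hx
    refine Submodule.mem_span_singleton.2 ⟨a * χ g, funext fun i ↦ ?_⟩
    simp [hv, mul_assoc]

theorem stmt12_general [IsCyclic H] (hH : Nat.card H = n) (v : Fin n → F)
    (hcode : IsLeftGCode G (Submodule.span F {v})) :
    IsLeftGCode H (Submodule.span F {v}) := by
  obtain ⟨φ, χ, c, hv⟩ := isLeftGCode_span_singleton_iff.1 hcode
  have : Finite G := Finite.of_equiv _ φ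
  have hcard : Nat.card G = Nat.card H := by rw [hH, ← Nat.card_congr φ, Nat.card_fin]
  have : Finite χ.range := Finite.of_surjective _ χ.rangeRestrict_surjective
  obtain ⟨e, ψ, hψ⟩ := exists_equiv_monoidHom_of_isCyclic_range χ hcard
  exact isLeftGCode_span_singleton_iff.2
    ⟨φ.trans e, ψ, c, fun i ↦ by rw [Equiv.trans_apply, hψ, hv]⟩

end LeftGCode

/-- If a one-dimensional code is a left group code then it is a cyclic group code,
i.e. a left `G`-code for `G` the cyclic group of order `n`. -/
theorem stmt12 {F : Type*} [Field F] [Fintype F] {n : ℕ} (v : Fin n → F) (hv : v ≠ 0)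
    (hcode : ∃ (G : Type) (inst : Group G), @IsLeftGCode F _ n G inst (Submodule.span F {v})) :
    IsLeftGCode (Multiplicative (ZMod n)) (Submodule.span F {v}) := by
  obtain ⟨G, _, hG⟩ := hcode
  exact stmt12_general (H := Multiplicative (ZMod n)) (Nat.card_zmod n) v hG
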